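/- arXiv:1502.02148 — 2 statements merged into one kernel-verified Lean document; each statement's English description precedes it below -/
import Mathlib

section
/- There exists a constant C > 0 such that for every real x ≥ 2, the quantity (∑ over pairs (I, J) ∈ P(x) of N(I ⊔ J)) / (number of pairs in P(x)) differs from (π/(4·ζ_{ℚ(i)}(2)))·log x by at most C. In other words, the expected norm of the greatest common divisor of two nonzero ideals of ℤ[i] chosen uniformly and independently from those of norm at most x is (π/(4·ζ_{ℚ(i)}(2)))·log x + O(1). -/
open Real

/-- The absolute norm of an ideal of `ℤ[i]`: the cardinality of the quotient ring. -/
noncomputable def normI (I : Ideal GaussianInt) : ℕ := Nat.card (GaussianInt ⧸ I)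

/-- `P x` : pairs of nonzero ideals of `ℤ[i]` with both norms at most `x`. -/
noncomputable def P (x : ℝ) : Set (Ideal GaussianInt × Ideal GaussianInt) :=
  {p | p.1 ≠ ⊥ ∧ p.2 ≠ ⊥ ∧ (normI p.1 : ℝ) ≤ x ∧ (normI p.2 : ℝ) ≤ x}

/-- `ζ_{ℚ(i)}(2)`, the sum of `1/N(I)²` over nonzero ideals of `ℤ[i]`. -/
noncomputable def zetaQi2 : ℝ := ∑' I : {I : Ideal GaussianInt // I ≠ ⊥}, 1 / (normI I.1 : ℝ) ^ 2

/-!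
Suppose the number `n(x)` of nonzero ideals of norm at most `x` is `c x + O(x ^ θ)` with
`0 < θ < 1`. Dividing both ideals by their greatest common divisor `E` puts the pairs `(I, J)` with
`I ⊔ J = E` in bijection with the coprime pairs of norm at most `x / N(E)`; let `m(x)` be the number
of coprime pairs of norm at most `x`. Then `∑ m(x / N(E)) = n(x) ^ 2`, and Möbius inversion gives
`m(x) = c ^ 2 / ζ(2) * x ^ 2 + O(x ^ (1 + θ))`. Hence `∑ N(E) m(x / N(E))` is
`c ^ 2 / ζ(2) * x ^ 2 * ∑ 1 / N(E) + O(x ^ 2)`, partial summation turns `∑ 1 / N(E)` into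
`c log x + O(1)`, and dividing by `n(x) ^ 2 ∼ c ^ 2 x ^ 2` leaves `c / ζ(2) * log x + O(1)`.

For `ℤ[i]`, nonzero ideals correspond to lattice points of a half-open quadrant, so counting them in
a quarter disc of radius `√x` gives `c = π / 4` and `θ = 1 / 2`.
-/

open Filter Set UniqueFactorizationMonoid MeasureTheory
open scoped Asymptotics Finset

section Moebius

variable {α : Type*} [CommMonoidWithZero α] [UniqueFactorizationMonoid α]

theorem abs_moebius_le_one (a : α) : |moebius a| ≤ 1 := by
  by_cases ha : Squarefree a <;> simp [ha, abs_pow]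

-- Multiplication by an irreducible `p ∣ a` pairs the terms prime to `p` with the remaining ones.
theorem sum_moebius_of_mem_iff_dvd [Subsingleton αˣ] [DecidableEq α] {a : α} (ha : a ≠ 0)
    {s : Finset α} (hs : ∀ d, d ∈ s ↔ d ∣ a) : ∑ d ∈ s, moebius d = if a = 1 then 1 else 0 := by
  classical
  split_ifs with h1
  · have hs1 : s = {1} := by ext d; simp [hs, h1, ← isUnit_iff_dvd_one, isUnit_iff_eq_one]
    rw [hs1, Finset.sum_singleton, moebius_one]
  have hu : ¬IsUnit a := by rwa [isUnit_iff_eq_one]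
  obtain ⟨p, hp, hpa⟩ := WfDvdMonoid.exists_irreducible_factor hu ha
  have hprel {d : α} (hd : ¬p ∣ d) : IsRelPrime p d := hp.isRelPrime_iff_not_dvd.mpr hd
  have hcancel : ∑ d ∈ s with ¬p ∣ d, -moebius d = ∑ d ∈ s with p ∣ d, moebius d := by
    refine Finset.sum_bij_ne_zero (fun d _ _ ↦ p * d) ?_ ?_ ?_ ?_
    · simp only [Finset.mem_filter, hs]
      exact fun d hd _ ↦ ⟨(hprel hd.2).mul_dvd hpa hd.1, dvd_mul_right p d⟩
    · intro d _ _ e _ _ h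
      exact mul_left_cancel₀ hp.ne_zero h
    · intro b hb hμ
      rw [Finset.mem_filter, hs] at hb
      obtain ⟨hba, d, rfl⟩ := hb
      have hpd : ¬p ∣ d := fun h ↦ hμ <| moebius_of_not_squarefree fun hsq ↦
        hp.not_isUnit (hsq p (mul_dvd_mul_left p h))
      refine ⟨d, by simpa [hs] using ⟨(dvd_mul_left d p).trans hba, hpd⟩, fun h ↦ hμ ?_, rfl⟩
      rw [(hprel hpd).moebius_mul, hp.moebius_eq, neg_one_mul, h]
    · intro d hd _
      rw [(hprel (Finset.mem_filter.mp hd).2).moebius_mul, hp.moebius_eq, neg_one_mul]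
  rw [← Finset.sum_filter_add_sum_filter_not s (p ∣ ·), ← hcancel, Finset.sum_neg_distrib,
    neg_add_cancel]

end Moebius

section Counting

variable {R : Type*} [CommRing R] [IsDedekindDomain R] [Module.Free ℤ R] [Module.Finite ℤ R]

variable (R) in
theorem finite_ideals_absNorm_le (x : ℝ) : {I : Ideal R | I ≠ ⊥ ∧ (I.absNorm : ℝ) ≤ x}.Finite := by
  have : IsAddTorsionFree R := Module.isTorsionFree_int_iff_isAddTorsionFree.mp inferInstance
  have := CharZero.of_isAddTorsionFree R R
  exact (Ideal.finite_setOfPred_absNorm_le ⌊x⌋₊).subset fun I hI ↦ Nat.le_floor hI.2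

variable (R) in
/-- The finite set of nonzero ideals of `R` of absolute norm at most `x`. -/
noncomputable def idealsLE (x : ℝ) : Finset (Ideal R) :=
  (finite_ideals_absNorm_le R x).toFinset

@[simp]
theorem mem_idealsLE {x : ℝ} {I : Ideal R} : I ∈ idealsLE R x ↔ I ≠ ⊥ ∧ (I.absNorm : ℝ) ≤ x := by
  simp [idealsLE]

theorem absNorm_pos_of_ne_bot {I : Ideal R} (hI : I ≠ ⊥) : 0 < (I.absNorm : ℝ) := by
  exact_mod_cast Nat.pos_of_ne_zero (Ideal.absNorm_eq_zero_iff.not.mpr hI)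

theorem one_le_absNorm_of_ne_bot {I : Ideal R} (hI : I ≠ ⊥) : 1 ≤ (I.absNorm : ℝ) :=
  Nat.one_le_cast.mpr (Nat.cast_pos.mp (absNorm_pos_of_ne_bot hI))

theorem one_le_div_absNorm {x : ℝ} {I : Ideal R} (hI : I ∈ idealsLE R x) : 1 ≤ x / I.absNorm :=
  (one_le_div (absNorm_pos_of_ne_bot (mem_idealsLE.mp hI).1)).mpr (mem_idealsLE.mp hI).2

theorem mul_mem_idealsLE_iff {x : ℝ} {E D : Ideal R} (hE : E ≠ ⊥) :
    E * D ∈ idealsLE R x ↔ D ∈ idealsLE R (x / E.absNorm) := by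
  rw [mem_idealsLE, mem_idealsLE, map_mul, Nat.cast_mul, le_div_iff₀' (absNorm_pos_of_ne_bot hE),
    Ne, Ideal.mul_eq_bot, or_iff_right hE]

theorem sum_idealsLE_div_eq_sum_dvd {M : Type*} [AddCommMonoid M] {x : ℝ} {E : Ideal R}
    [DecidablePred (E ∣ ·)] (hE : E ≠ ⊥) (g : Ideal R → M) :
    ∑ D ∈ idealsLE R (x / E.absNorm), g (E * D) = ∑ K ∈ idealsLE R x with E ∣ K, g K := by
  refine Finset.sum_nbij (E * ·) (fun D hD ↦ ?_) (fun D _ D' _ h ↦ mul_left_cancel₀ hE h)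
    (fun K hK ↦ ?_) fun D _ ↦ rfl
  · exact Finset.mem_filter.mpr ⟨(mul_mem_idealsLE_iff hE).mpr hD, dvd_mul_right E D⟩
  · obtain ⟨hKx, D, rfl⟩ := Finset.mem_filter.mp hK
    exact ⟨D, (mul_mem_idealsLE_iff hE).mp hKx, rfl⟩

theorem sum_moebius_mul_sum_idealsLE (f : ℝ → ℝ) {x : ℝ} (hx : 1 ≤ x) :
    ∑ E ∈ idealsLE R x, (moebius E : ℝ) *
      ∑ D ∈ idealsLE R (x / E.absNorm), f (x / E.absNorm / D.absNorm) = f x := by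
  classical
  have hmoebius : ∀ K ∈ idealsLE R x, ∑ E ∈ idealsLE R x with E ∣ K, moebius E =
      if K = 1 then 1 else 0 := fun K hK ↦ by
    refine sum_moebius_of_mem_iff_dvd (mem_idealsLE.mp hK).1 fun D ↦ ?_
    rw [Finset.mem_filter, and_iff_right_iff_imp, mem_idealsLE]
    rintro ⟨C, rfl⟩
    obtain ⟨hne, hle⟩ := mem_idealsLE.mp hK
    rw [← Ideal.zero_eq_bot, mul_ne_zero_iff] at hne
    refine ⟨hne.1, le_trans ?_ hle⟩
    rw [map_mul, Nat.cast_mul]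
    exact le_mul_of_one_le_right (Nat.cast_nonneg _) (one_le_absNorm_of_ne_bot hne.2)
  calc ∑ E ∈ idealsLE R x, (moebius E : ℝ) *
        ∑ D ∈ idealsLE R (x / E.absNorm), f (x / E.absNorm / D.absNorm)
      = ∑ E ∈ idealsLE R x, ∑ K ∈ idealsLE R x with E ∣ K, moebius E * f (x / K.absNorm) := by
        refine Finset.sum_congr rfl fun E hE ↦ ?_
        rw [← Finset.mul_sum, ← sum_idealsLE_div_eq_sum_dvd (mem_idealsLE.mp hE).1]
        simp only [map_mul, Nat.cast_mul, div_div]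
    _ = ∑ K ∈ idealsLE R x, (∑ E ∈ idealsLE R x with E ∣ K, moebius E : ℤ) * f (x / K.absNorm) := by
        simp only [Finset.sum_filter, Int.cast_sum, Finset.sum_mul, apply_ite (Int.cast (R := ℝ)),
          Int.cast_zero, ite_mul, zero_mul]
        exact Finset.sum_comm
    _ = ∑ K ∈ idealsLE R x, if K = 1 then f x else 0 := by
        refine Finset.sum_congr rfl fun K hK ↦ ?_
        rw [hmoebius K hK]
        split_ifs with h <;> simp [h]
    _ = f x := by
        rw [Finset.sum_ite_eq', if_pos (by simpa [Ideal.one_eq_top] using hx)]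

variable (R) in
/-- Ordered pairs of coprime nonzero ideals of absolute norm at most `x`. -/
noncomputable def coprimePairs (x : ℝ) : Finset (Ideal R × Ideal R) :=
  open scoped Classical in {p ∈ idealsLE R x ×ˢ idealsLE R x | p.1 ⊔ p.2 = ⊤}

theorem card_filter_sup_eq [DecidableEq (Ideal R)] {x : ℝ} {E : Ideal R} (hE : E ≠ ⊥) :
    #{p ∈ idealsLE R x ×ˢ idealsLE R x | p.1 ⊔ p.2 = E} =
      #(coprimePairs R (x / E.absNorm)) := by
  symm
  refine Finset.card_nbij (Prod.map (E * ·) (E * ·)) (fun p hp ↦ ?_)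
    (Function.Injective.injOn ?_) fun p hp ↦ ?_
  · rw [Finset.mem_coe] at hp ⊢
    simp only [coprimePairs, Finset.mem_filter, Finset.mem_product, Prod.map_fst, Prod.map_snd,
      mul_mem_idealsLE_iff hE, ← Ideal.mul_sup] at hp ⊢
    exact ⟨hp.1, by rw [hp.2, Ideal.mul_top]⟩
  · exact (mul_right_injective₀ hE).prodMap (mul_right_injective₀ hE)
  · obtain ⟨I, J⟩ := p
    simp only [Finset.coe_filter, Finset.mem_product, mem_ofPred_eq] at hp
    obtain ⟨hIJ, hsup⟩ := hp
    obtain ⟨I, rfl⟩ : E ∣ I := Ideal.dvd_iff_le.mpr (hsup ▸ le_sup_left)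
    obtain ⟨J, rfl⟩ : E ∣ J := Ideal.dvd_iff_le.mpr (hsup ▸ le_sup_right)
    refine ⟨(I, J), ?_, rfl⟩
    rw [mul_mem_idealsLE_iff hE, mul_mem_idealsLE_iff hE] at hIJ
    rw [← Ideal.mul_sup] at hsup
    simp only [coprimePairs, Finset.coe_filter, Finset.mem_product, mem_ofPred_eq]
    exact ⟨hIJ, mul_left_cancel₀ hE (by rw [hsup, Ideal.mul_top])⟩

theorem sum_comp_sup_eq_sum_mul_card_coprimePairs (g : Ideal R → ℝ) (x : ℝ) :
    ∑ p ∈ idealsLE R x ×ˢ idealsLE R x, g (p.1 ⊔ p.2) =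
      ∑ E ∈ idealsLE R x, g E * #(coprimePairs R (x / E.absNorm)) := by
  classical
  have hmaps : ∀ p ∈ idealsLE R x ×ˢ idealsLE R x, p.1 ⊔ p.2 ∈ idealsLE R x := fun p hp ↦ by
    obtain ⟨⟨hne, hle⟩, -⟩ := by simpa only [Finset.mem_product, mem_idealsLE] using hp
    refine mem_idealsLE.mpr ⟨fun h ↦ hne (eq_bot_mono le_sup_left h), le_trans ?_ hle⟩
    refine Nat.cast_le.mpr (Nat.le_of_dvd ?_ (Ideal.absNorm_dvd_absNorm_of_le le_sup_left))
    exact Nat.cast_pos.mp (absNorm_pos_of_ne_bot hne)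
  rw [← Finset.sum_fiberwise_of_maps_to hmaps]
  refine Finset.sum_congr rfl fun E hE ↦ ?_
  rw [Finset.sum_congr rfl fun p hp ↦ congrArg g (Finset.mem_filter.mp hp).2, Finset.sum_const,
    nsmul_eq_mul, card_filter_sup_eq (mem_idealsLE.mp hE).1, mul_comm]

end Counting

section PartialSummation

variable {R : Type*} [CommRing R] [IsDedekindDomain R] [Module.Free ℤ R] [Module.Finite ℤ R]

theorem sum_card_absNorm_eq_mul (φ : ℝ → ℝ) {x : ℝ} (hx : 0 ≤ x) :
    ∑ k ∈ Finset.Icc 0 ⌊x⌋₊, φ k * #{I ∈ idealsLE R k | I.absNorm = k} =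
      ∑ I ∈ idealsLE R x, φ I.absNorm := by
  have hmaps : ∀ I ∈ idealsLE R x, I.absNorm ∈ Finset.Icc 0 ⌊x⌋₊ := fun I hI ↦
    Finset.mem_Icc.mpr ⟨Nat.zero_le _, Nat.le_floor (mem_idealsLE.mp hI).2⟩
  rw [← Finset.sum_fiberwise_of_maps_to hmaps]
  refine Finset.sum_congr rfl fun k hk ↦ ?_
  have hfiber : {I ∈ idealsLE R x | I.absNorm = k} = {I ∈ idealsLE R k | I.absNorm = k} := by
    ext I
    simp only [Finset.mem_filter, mem_idealsLE, and_congr_left_iff, and_congr_right_iff]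
    rintro rfl -
    simpa using (Nat.le_floor_iff hx).mp (Finset.mem_Icc.mp hk).2
  rw [Finset.sum_congr rfl fun I hI ↦ by rw [(Finset.mem_filter.mp hI).2], Finset.sum_const,
    hfiber, nsmul_eq_mul, mul_comm]

theorem sum_card_absNorm_eq {x : ℝ} (hx : 0 ≤ x) :
    ∑ k ∈ Finset.Icc 0 ⌊x⌋₊, (#{I ∈ idealsLE R k | I.absNorm = k} : ℝ) = #(idealsLE R x) := by
  simpa using sum_card_absNorm_eq_mul (R := R) (fun _ ↦ 1) hx

theorem intervalIntegrable_mul_card_idealsLE {g : ℝ → ℝ} {x : ℝ} (hx : 1 ≤ x)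
    (hg : ContinuousOn g (Icc 1 x)) :
    IntervalIntegrable (fun t ↦ g t * #(idealsLE R t)) volume 1 x := by
  rw [intervalIntegrable_iff_integrableOn_Ioc_of_le hx]
  refine ((integrableOn_mul_sum_Icc (fun k ↦ (#{I ∈ idealsLE R k | I.absNorm = k} : ℝ)) (m := 0)
    zero_le_one hg.integrableOn_Icc).mono_set Ioc_subset_Icc_self).congr_fun (fun t ht ↦ ?_)
    measurableSet_Ioc
  simp only [sum_card_absNorm_eq (zero_le_one.trans ht.1.le)]

theorem continuousOn_rpow_const_Icc_one (r x : ℝ) : ContinuousOn (fun t : ℝ ↦ t ^ r) (Icc 1 x) :=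
  continuousOn_id.rpow_const fun _ ht ↦ .inl (zero_lt_one.trans_le ht.1).ne'

theorem integral_rpow_one {r x : ℝ} (hr : r ≠ -1) (hx : 1 ≤ x) :
    ∫ t in 1..x, t ^ r = (x ^ (r + 1) - 1) / (r + 1) := by
  rw [integral_rpow (.inr ⟨hr, fun h ↦ ?_⟩), one_rpow]
  rw [uIcc_of_le hx] at h
  exact absurd h.1 (by norm_num)

theorem sum_absNorm_rpow_neg_eq (s : ℝ) {x : ℝ} (hx : 1 ≤ x) :
    ∑ I ∈ idealsLE R x, (I.absNorm : ℝ) ^ (-s) =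
      x ^ (-s) * #(idealsLE R x) + s * ∫ t in 1..x, t ^ (-s - 1) * #(idealsLE R t) := by
  have hderiv : ∀ t : ℝ, 1 ≤ t → HasDerivAt (fun t ↦ t ^ (-s)) (-s * t ^ (-s - 1)) t := fun t ht ↦
    hasDerivAt_rpow_const (.inl (zero_lt_one.trans_le ht).ne')
  have hcont : ContinuousOn (fun t : ℝ ↦ -s * t ^ (-s - 1)) (Icc 1 x) :=
    continuousOn_const.mul (continuousOn_rpow_const_Icc_one _ x)
  have hbot : (#{I ∈ idealsLE R ((0 : ℕ) : ℝ) | I.absNorm = 0} : ℝ) = 0 := by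
    refine Nat.cast_eq_zero.mpr (Finset.card_eq_zero.mpr (Finset.filter_eq_empty_iff.mpr ?_))
    exact fun I hI ↦ Ideal.absNorm_eq_zero_iff.not.mpr (mem_idealsLE.mp hI).1
  have habel := sum_mul_eq_sub_integral_mul₀ (𝕜 := ℝ)
    (c := fun k ↦ (#{I ∈ idealsLE R k | I.absNorm = k} : ℝ)) (f := fun t : ℝ ↦ t ^ (-s)) hbot x
    (fun t ht ↦ (hderiv t ht.1).differentiableAt)
    (hcont.congr (fun t ht ↦ (hderiv t ht.1).deriv)).integrableOn_Icc
  have hx0 := zero_le_one.trans hx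
  rw [sum_card_absNorm_eq_mul (fun t ↦ t ^ (-s)) hx0, sum_card_absNorm_eq hx0] at habel
  rw [habel, ← intervalIntegral.integral_const_mul, intervalIntegral.integral_of_le hx,
    sub_eq_add_neg, ← integral_neg]
  congr 1
  refine setIntegral_congr_fun measurableSet_Ioc fun t ht ↦ ?_
  simp only [(hderiv t ht.1.le).deriv, sum_card_absNorm_eq (zero_le_one.trans ht.1.le)]
  ring

theorem sum_absNorm_rpow_neg_le {B : ℝ} (hB : ∀ x, 1 ≤ x → #(idealsLE R x) ≤ B * x) {s : ℝ}
    (hs0 : 0 ≤ s) (hs1 : s ≠ 1) {x : ℝ} (hx : 1 ≤ x) :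
    ∑ I ∈ idealsLE R x, (I.absNorm : ℝ) ^ (-s) ≤
      B * x ^ (1 - s) + s * (B * ((x ^ (1 - s) - 1) / (1 - s))) := by
  have hbound (t : ℝ) (ht : 1 ≤ t) (r : ℝ) : t ^ r * #(idealsLE R t) ≤ B * t ^ (r + 1) := by
    have ht0 := zero_lt_one.trans_le ht
    calc t ^ r * #(idealsLE R t) ≤ t ^ r * (B * t) := by gcongr; exact hB t ht
      _ = B * t ^ (r + 1) := by rw [rpow_add_one ht0.ne']; ring
  rw [sum_absNorm_rpow_neg_eq s hx, show 1 - s = -s + 1 by ring]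
  refine add_le_add (hbound x hx (-s)) (mul_le_mul_of_nonneg_left ?_ hs0)
  calc ∫ t in 1..x, t ^ (-s - 1) * #(idealsLE R t) ≤ ∫ t in 1..x, B * t ^ (-s) := by
        refine intervalIntegral.integral_mono_on hx ?_ ?_ fun t ht ↦ ?_
        · exact intervalIntegrable_mul_card_idealsLE hx (continuousOn_rpow_const_Icc_one _ x)
        · exact ((continuousOn_rpow_const_Icc_one _ x).intervalIntegrable_of_Icc hx).const_mul B
        · simpa using hbound t ht.1 (-s - 1)
    _ = B * ((x ^ (-s + 1) - 1) / (-s + 1)) := by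
        rw [intervalIntegral.integral_const_mul, integral_rpow_one (by simpa using hs1) hx]

theorem isBigO_rpow_rpow_of_le {r s : ℝ} (h : r ≤ s) :
    (fun x : ℝ ↦ x ^ r) =O[𝓟 (Ici 1)] (fun x ↦ x ^ s) := by
  refine Asymptotics.isBigO_principal.mpr ⟨1, fun x (hx : 1 ≤ x) ↦ ?_⟩
  rw [one_mul, norm_of_nonneg (by positivity), norm_of_nonneg (by positivity)]
  exact rpow_le_rpow_of_exponent_le hx h

theorem isBigO_sum_absNorm_rpow_neg
    (hlin : (fun x ↦ (#(idealsLE R x) : ℝ)) =O[𝓟 (Ici 1)] (fun x ↦ x)) {s : ℝ} (hs0 : 0 ≤ s)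
    (hs1 : s < 1) :
    (fun x ↦ ∑ I ∈ idealsLE R x, (I.absNorm : ℝ) ^ (-s)) =O[𝓟 (Ici 1)] (fun x ↦ x ^ (1 - s)) := by
  obtain ⟨B, hB0, hB⟩ := hlin.exists_pos
  rw [Asymptotics.isBigOWith_principal] at hB
  refine Asymptotics.isBigO_principal.mpr ⟨B + s * (B / (1 - s)), fun x (hx : 1 ≤ x) ↦ ?_⟩
  have hx0 : 0 ≤ x := zero_le_one.trans hx
  rw [norm_of_nonneg (by positivity), norm_of_nonneg (by positivity)]
  have hle := sum_absNorm_rpow_neg_le (fun x hx ↦ by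
    simpa [abs_of_nonneg (zero_le_one.trans hx)] using hB x hx) hs0 hs1.ne hx
  have h1s : 0 < 1 - s := sub_pos.mpr hs1
  calc ∑ I ∈ idealsLE R x, (I.absNorm : ℝ) ^ (-s)
      ≤ B * x ^ (1 - s) + s * (B * ((x ^ (1 - s) - 1) / (1 - s))) := hle
    _ ≤ B * x ^ (1 - s) + s * (B * (x ^ (1 - s) / (1 - s))) := by gcongr; linarith
    _ = (B + s * (B / (1 - s))) * x ^ (1 - s) := by ring

theorem summable_absNorm_rpow_neg
    (hlin : (fun x ↦ (#(idealsLE R x) : ℝ)) =O[𝓟 (Ici 1)] (fun x ↦ x)) {s : ℝ} (hs : 1 < s) :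
    Summable fun I : Ideal R ↦ (I.absNorm : ℝ) ^ (-s) := by
  obtain ⟨B, hB0, hB⟩ := hlin.exists_pos
  rw [Asymptotics.isBigOWith_principal] at hB
  refine summable_of_sum_le (c := B + s * (B / (s - 1))) (fun I ↦ by positivity) fun u ↦ ?_
  obtain ⟨x, hx, hux⟩ : ∃ x : ℝ, 1 ≤ x ∧ ∀ I ∈ u, (I.absNorm : ℝ) ≤ x :=
    ⟨1 + ∑ I ∈ u, (I.absNorm : ℝ), le_add_of_nonneg_right (by positivity),
      fun I hI ↦ le_add_of_nonneg_of_le zero_le_one <|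
        Finset.single_le_sum (fun I _ ↦ Nat.cast_nonneg I.absNorm) hI⟩
  have hs1 : 0 < s - 1 := sub_pos.mpr hs
  have hxs : x ^ (1 - s) ≤ 1 := rpow_le_one_of_one_le_of_nonpos hx (by linarith)
  calc ∑ I ∈ u, (I.absNorm : ℝ) ^ (-s) ≤ ∑ I ∈ idealsLE R x, (I.absNorm : ℝ) ^ (-s) := by
        classical
        rw [← Finset.sum_erase u (a := ⊥) (by simp [zero_rpow (by linarith : -s ≠ 0)])]
        refine Finset.sum_le_sum_of_subset_of_nonneg (fun I hI ↦ ?_) fun I _ _ ↦ by positivity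
        obtain ⟨hne, hI⟩ := Finset.mem_erase.mp hI
        exact mem_idealsLE.mpr ⟨hne, hux I hI⟩
    _ ≤ B * x ^ (1 - s) + s * (B * ((x ^ (1 - s) - 1) / (1 - s))) :=
        sum_absNorm_rpow_neg_le (fun x hx ↦ by
          simpa [abs_of_nonneg (zero_le_one.trans hx)] using hB x hx) (by linarith) hs.ne' hx
    _ = B * x ^ (1 - s) + s * (B * ((1 - x ^ (1 - s)) / (s - 1))) := by
        rw [← neg_sub 1 (x ^ (1 - s)), ← neg_sub s 1, neg_div_neg_eq]
    _ ≤ B * 1 + s * (B * (1 / (s - 1))) := by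
        gcongr
        exact sub_le_self _ (by positivity)
    _ = B + s * (B / (s - 1)) := by ring

theorem isBigO_card_idealsLE {c θ : ℝ} (hθ : θ ≤ 1)
    (hcount : (fun x ↦ #(idealsLE R x) - c * x) =O[𝓟 (Ici 1)] (fun x ↦ x ^ θ)) :
    (fun x ↦ (#(idealsLE R x) : ℝ)) =O[𝓟 (Ici 1)] (fun x ↦ x) := by
  have hsub := hcount.trans (isBigO_rpow_rpow_of_le hθ)
  simp only [rpow_one] at hsub
  simpa using hsub.add ((Asymptotics.isBigO_refl (fun x : ℝ ↦ x) _).const_mul_left c)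

theorem sum_inv_absNorm_sub_log_eq (c : ℝ) {x : ℝ} (hx : 1 ≤ x) :
    ∑ I ∈ idealsLE R x, (I.absNorm : ℝ)⁻¹ - c * Real.log x =
      x⁻¹ * #(idealsLE R x) + ∫ t in 1..x, t ^ (-2 : ℝ) * (#(idealsLE R t) - c * t) := by
  have habel := sum_absNorm_rpow_neg_eq (R := R) 1 hx
  have hinv : IntervalIntegrable (fun t : ℝ ↦ t⁻¹) volume 1 x :=
    (continuousOn_inv₀.mono fun t ht ↦
      (zero_lt_one.trans_le ht.1).ne').intervalIntegrable_of_Icc hx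
  have hsplit : ∫ t in 1..x, t ^ (-2 : ℝ) * (#(idealsLE R t) - c * t) =
      ∫ t in 1..x, (t ^ (-2 : ℝ) * #(idealsLE R t) - c * t⁻¹) := by
    refine intervalIntegral.integral_congr fun t ht ↦ ?_
    rw [uIcc_of_le hx] at ht
    have ht0 : 0 < t := zero_lt_one.trans_le ht.1
    simp only [rpow_neg ht0.le, rpow_two]
    field_simp
  rw [hsplit, intervalIntegral.integral_sub (intervalIntegrable_mul_card_idealsLE hx
    (continuousOn_rpow_const_Icc_one _ x)) (hinv.const_mul c), intervalIntegral.integral_const_mul,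
    integral_inv_of_pos one_pos (by positivity), div_one]
  norm_num [rpow_neg_one] at habel ⊢
  linarith

theorem norm_integral_rpow_mul_card_sub_le {c θ B : ℝ} (hθ : θ < 1) (hB0 : 0 ≤ B)
    (hB : ∀ t, 1 ≤ t → ‖#(idealsLE R t) - c * t‖ ≤ B * t ^ θ) {x : ℝ} (hx : 1 ≤ x) :
    ‖∫ t in 1..x, t ^ (-2 : ℝ) * (#(idealsLE R t) - c * t)‖ ≤ B / (1 - θ) := by
  have h1θ : 0 < 1 - θ := sub_pos.mpr hθ
  have hbound (t : ℝ) (ht : 1 ≤ t) :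
      ‖t ^ (-2 : ℝ) * (#(idealsLE R t) - c * t)‖ ≤ B * t ^ (-2 + θ) := by
    rw [norm_mul, norm_of_nonneg (by positivity), rpow_add (by positivity), mul_left_comm]
    gcongr
    exact hB t ht
  calc ‖∫ t in 1..x, t ^ (-2 : ℝ) * (#(idealsLE R t) - c * t)‖
      ≤ ∫ t in 1..x, B * t ^ (-2 + θ) :=
        intervalIntegral.norm_integral_le_of_norm_le hx
          (.of_forall fun t ht ↦ hbound t ht.1.le)
          (((continuousOn_rpow_const_Icc_one _ x).intervalIntegrable_of_Icc hx).const_mul B)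
    _ = B * ((1 - x ^ (-2 + θ + 1)) / (1 - θ)) := by
        rw [intervalIntegral.integral_const_mul, integral_rpow_one (by linarith) hx,
          ← neg_div_neg_eq]
        ring_nf
    _ ≤ B * (1 / (1 - θ)) := by
        gcongr
        exact sub_le_self _ (by positivity)
    _ = B / (1 - θ) := mul_one_div _ _

theorem isBigO_sum_inv_absNorm_sub_log {c θ : ℝ} (hθ : θ < 1)
    (hcount : (fun x ↦ #(idealsLE R x) - c * x) =O[𝓟 (Ici 1)] (fun x ↦ x ^ θ)) :
    (fun x ↦ ∑ I ∈ idealsLE R x, (I.absNorm : ℝ)⁻¹ - c * Real.log x) =O[𝓟 (Ici 1)]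
      (fun _ ↦ (1 : ℝ)) := by
  obtain ⟨A, hA⟩ := (isBigO_card_idealsLE hθ.le hcount).isBigOWith
  obtain ⟨B, hB0, hB⟩ := hcount.exists_pos
  rw [Asymptotics.isBigOWith_principal] at hA hB
  refine Asymptotics.isBigO_principal.mpr ⟨A + B / (1 - θ), fun x (hx : 1 ≤ x) ↦ ?_⟩
  rw [sum_inv_absNorm_sub_log_eq c hx, norm_one, mul_one]
  refine (norm_add_le _ _).trans (add_le_add ?_ ?_)
  · rw [norm_mul, norm_inv, inv_mul_le_iff₀ (norm_pos_iff.mpr (by positivity)), mul_comm]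
    exact hA x hx
  · refine norm_integral_rpow_mul_card_sub_le hθ hB0.le (fun t ht ↦ ?_) hx
    simpa [abs_of_nonneg (rpow_nonneg (zero_le_one.trans ht) θ)] using hB t ht

end PartialSummation

section Density

variable {R : Type*} [CommRing R] [IsDedekindDomain R] [Module.Free ℤ R] [Module.Finite ℤ R]

variable (R) in
/-- The Dedekind zeta function of `R` at a real point `s ≠ 0`. The sum runs over all ideals:
the zero ideal contributes `0 ^ (-s) = 0`. -/
noncomputable def idealZeta (s : ℝ) : ℝ := ∑' I : Ideal R, (I.absNorm : ℝ) ^ (-s)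

omit [Module.Finite ℤ R] in
theorem idealZeta_pos {s : ℝ} (hs : Summable fun I : Ideal R ↦ (I.absNorm : ℝ) ^ (-s)) :
    0 < idealZeta R s :=
  hs.tsum_pos (fun I ↦ by positivity) ⊤ (by simp)

theorem isBigO_idealZeta_sub_sum
    (hlin : (fun x ↦ (#(idealsLE R x) : ℝ)) =O[𝓟 (Ici 1)] (fun x ↦ x)) {r s : ℝ} (hr : 1 < r)
    (hrs : r ≤ s) :
    (fun x ↦ idealZeta R s - ∑ I ∈ idealsLE R x, (I.absNorm : ℝ) ^ (-s)) =O[𝓟 (Ici 1)]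
      (fun x ↦ x ^ (r - s)) := by
  have hsumr := summable_absNorm_rpow_neg hlin hr
  have hsums := summable_absNorm_rpow_neg hlin (hr.trans_le hrs)
  refine Asymptotics.isBigO_principal.mpr ⟨idealZeta R r, fun x (hx : 1 ≤ x) ↦ ?_⟩
  have hterm (I : {I : Ideal R // I ∉ idealsLE R x}) :
      (I.1.absNorm : ℝ) ^ (-s) ≤ (I.1.absNorm : ℝ) ^ (-r) * x ^ (r - s) := by
    obtain ⟨I, hI⟩ := I
    by_cases hbot : I = ⊥
    · simp [hbot, zero_rpow (by linarith : -s ≠ 0), zero_rpow (by linarith : -r ≠ 0)]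
    have hxI : x < I.absNorm := by simpa [hbot] using hI
    rw [show -s = -r + (r - s) by ring, rpow_add (absNorm_pos_of_ne_bot hbot)]
    gcongr 1
    exact rpow_le_rpow_of_nonpos (by positivity) hxI.le (sub_nonpos.mpr hrs)
  rw [idealZeta, ← hsums.sum_add_tsum_subtype_compl (idealsLE R x), add_sub_cancel_left,
    norm_of_nonneg (tsum_nonneg fun I ↦ by positivity), norm_of_nonneg (by positivity)]
  calc ∑' I : {I // I ∉ idealsLE R x}, (I.1.absNorm : ℝ) ^ (-s)
      ≤ ∑' I : {I // I ∉ idealsLE R x}, (I.1.absNorm : ℝ) ^ (-r) * x ^ (r - s) :=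
        (hsums.subtype _).tsum_le_tsum hterm ((hsumr.subtype _).mul_right _)
    _ ≤ idealZeta R r * x ^ (r - s) := by
        rw [tsum_mul_right]
        gcongr
        exact hsumr.tsum_subtype_le _ _ fun I ↦ by positivity

theorem isBigO_of_isBigO_sum_idealsLE_div {f : ℝ → ℝ} {s : ℝ}
    (hs : Summable fun I : Ideal R ↦ (I.absNorm : ℝ) ^ (-s))
    (hf : (fun x ↦ ∑ D ∈ idealsLE R x, f (x / D.absNorm)) =O[𝓟 (Ici 1)] (fun x ↦ x ^ s)) :
    f =O[𝓟 (Ici 1)] (fun x ↦ x ^ s) := by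
  obtain ⟨C, hC0, hC⟩ := hf.exists_pos
  rw [Asymptotics.isBigOWith_principal] at hC
  refine Asymptotics.isBigO_principal.mpr ⟨C * idealZeta R s, fun x (hx : 1 ≤ x) ↦ ?_⟩
  have hx0 : 0 ≤ x := zero_le_one.trans hx
  have hterm (E : Ideal R) (hE : E ∈ idealsLE R x) : ‖(moebius E : ℝ) *
      ∑ D ∈ idealsLE R (x / E.absNorm), f (x / E.absNorm / D.absNorm)‖ ≤
      C * x ^ s * (E.absNorm : ℝ) ^ (-s) := by
    have hμ : ‖(moebius E : ℝ)‖ ≤ 1 := by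
      rw [norm_eq_abs, ← Int.cast_abs]
      exact_mod_cast abs_moebius_le_one E
    have hCE := hC _ (one_le_div_absNorm hE)
    rw [norm_of_nonneg (rpow_nonneg (by positivity) s), div_rpow hx0 (by positivity)] at hCE
    rw [norm_mul, rpow_neg (by positivity), mul_assoc, ← div_eq_mul_inv]
    exact (mul_le_of_le_one_left (norm_nonneg _) hμ).trans hCE
  calc ‖f x‖ ≤ ∑ E ∈ idealsLE R x, C * x ^ s * (E.absNorm : ℝ) ^ (-s) := by
        rw [← sum_moebius_mul_sum_idealsLE (R := R) f hx]
        exact norm_sum_le_of_le _ hterm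
    _ ≤ C * x ^ s * idealZeta R s := by
        rw [← Finset.mul_sum]
        gcongr
        exact hs.sum_le_tsum _ fun I _ ↦ by positivity
    _ = C * idealZeta R s * ‖x ^ s‖ := by
        rw [norm_of_nonneg (by positivity)]
        ring

theorem sum_card_coprimePairs_div (x : ℝ) :
    ∑ D ∈ idealsLE R x, (#(coprimePairs R (x / D.absNorm)) : ℝ) = #(idealsLE R x) ^ 2 := by
  simpa [sq] using (sum_comp_sup_eq_sum_mul_card_coprimePairs (R := R) (fun _ ↦ 1) x).symm

variable {c θ : ℝ}

theorem isBigO_card_idealsLE_sq_sub (hθ : θ ≤ 1)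
    (hcount : (fun x ↦ #(idealsLE R x) - c * x) =O[𝓟 (Ici 1)] (fun x ↦ x ^ θ)) :
    (fun x ↦ (#(idealsLE R x) : ℝ) ^ 2 - c ^ 2 * x ^ 2) =O[𝓟 (Ici 1)] (fun x ↦ x ^ (1 + θ)) := by
  have hsum : (fun x ↦ #(idealsLE R x) + c * x) =O[𝓟 (Ici 1)] (fun x ↦ x) :=
    (isBigO_card_idealsLE hθ hcount).add
      ((Asymptotics.isBigO_refl (fun x : ℝ ↦ x) _).const_mul_left c)
  refine (hsum.mul hcount).congr' (.of_forall fun x ↦ by ring) ?_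
  filter_upwards [mem_principal_self (Ici (1 : ℝ))] with x hx
  rw [rpow_add (zero_lt_one.trans_le hx), rpow_one]

theorem isBigO_card_coprimePairs_sub (hθ0 : 0 < θ) (hθ1 : θ < 1)
    (hcount : (fun x ↦ #(idealsLE R x) - c * x) =O[𝓟 (Ici 1)] (fun x ↦ x ^ θ)) :
    (fun x ↦ #(coprimePairs R x) - c ^ 2 / idealZeta R 2 * x ^ 2) =O[𝓟 (Ici 1)]
      (fun x ↦ x ^ (1 + θ)) := by
  have hlin := isBigO_card_idealsLE hθ1.le hcount
  have hs : Summable fun I : Ideal R ↦ (I.absNorm : ℝ) ^ (-(1 + θ)) :=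
    summable_absNorm_rpow_neg hlin (by linarith)
  have hζ : 0 < idealZeta R 2 := idealZeta_pos (summable_absNorm_rpow_neg hlin one_lt_two)
  have htail : (fun x ↦ c ^ 2 / idealZeta R 2 *
      (x ^ 2 * (idealZeta R 2 - ∑ D ∈ idealsLE R x, (D.absNorm : ℝ) ^ (-2 : ℝ)))) =O[𝓟 (Ici 1)]
      (fun x ↦ x ^ (1 + θ)) := by
    refine ((Asymptotics.isBigO_refl (fun x : ℝ ↦ x ^ 2) _).mul
      (isBigO_idealZeta_sub_sum hlin (by linarith : 1 < 1 + θ) (by linarith))).const_mul_left _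
      |>.congr' .rfl ?_
    filter_upwards [mem_principal_self (Ici (1 : ℝ))] with x hx
    rw [← rpow_natCast, ← rpow_add (zero_lt_one.trans_le hx)]
    norm_num
  refine isBigO_of_isBigO_sum_idealsLE_div hs
    (((isBigO_card_idealsLE_sq_sub hθ1.le hcount).add htail).congr_left fun x ↦ ?_)
  have hmain : ∑ D ∈ idealsLE R x, c ^ 2 / idealZeta R 2 * (x / D.absNorm) ^ 2 =
      c ^ 2 / idealZeta R 2 * (x ^ 2 * ∑ D ∈ idealsLE R x, (D.absNorm : ℝ) ^ (-2 : ℝ)) := by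
    simp only [Finset.mul_sum, div_pow, rpow_neg (Nat.cast_nonneg _), rpow_two, ← div_eq_mul_inv]
  rw [Finset.sum_sub_distrib, sum_card_coprimePairs_div, hmain]
  field_simp
  ring

variable (R) in
/-- The mean of `N(I ⊔ J)` over ordered pairs of nonzero ideals of absolute norm at most `x`;
`I ⊔ J` is the greatest common divisor of `I` and `J`. -/
noncomputable def meanGcdNorm (x : ℝ) : ℝ :=
  (∑ p ∈ idealsLE R x ×ˢ idealsLE R x, ((p.1 ⊔ p.2).absNorm : ℝ)) / #(idealsLE R x) ^ 2

theorem isBigO_sum_absNorm_mul_comp_div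
    (hlin : (fun x ↦ (#(idealsLE R x) : ℝ)) =O[𝓟 (Ici 1)] (fun x ↦ x)) {f : ℝ → ℝ}
    (hθ0 : 0 ≤ θ) (hθ1 : θ < 1) (hf : f =O[𝓟 (Ici 1)] (fun x ↦ x ^ (1 + θ))) :
    (fun x ↦ ∑ E ∈ idealsLE R x, E.absNorm * f (x / E.absNorm)) =O[𝓟 (Ici 1)]
      (fun x ↦ x ^ 2) := by
  obtain ⟨C, hC0, hC⟩ := hf.exists_pos
  rw [Asymptotics.isBigOWith_principal] at hC
  have hsum : (fun x ↦ x ^ (1 + θ) * ∑ E ∈ idealsLE R x, (E.absNorm : ℝ) ^ (-θ)) =O[𝓟 (Ici 1)]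
      (fun x ↦ x ^ 2) := by
    refine ((Asymptotics.isBigO_refl _ _).mul
      (isBigO_sum_absNorm_rpow_neg hlin hθ0 hθ1)).congr' .rfl ?_
    filter_upwards [mem_principal_self (Ici (1 : ℝ))] with x hx
    rw [← rpow_add (zero_lt_one.trans_le hx), ← rpow_two]
    ring_nf
  refine (Asymptotics.isBigO_principal.mpr ⟨C, fun x (hx : 1 ≤ x) ↦ ?_⟩).trans hsum
  rw [norm_of_nonneg (r := _ * _) (by positivity), Finset.mul_sum, Finset.mul_sum]
  refine norm_sum_le_of_le _ fun E hE ↦ ?_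
  have hE0 := absNorm_pos_of_ne_bot (mem_idealsLE.mp hE).1
  have hCE := hC _ (one_le_div_absNorm hE)
  rw [norm_of_nonneg (rpow_nonneg (by positivity) (1 + θ)), div_rpow (by positivity) hE0.le] at hCE
  calc ‖E.absNorm * f (x / E.absNorm)‖
      ≤ E.absNorm * (C * (x ^ (1 + θ) / (E.absNorm : ℝ) ^ (1 + θ))) := by
        rw [norm_mul, norm_of_nonneg hE0.le]
        gcongr
    _ = C * (x ^ (1 + θ) * (E.absNorm : ℝ) ^ (-θ)) := by
        rw [rpow_neg hE0.le, rpow_add hE0, rpow_one]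
        field_simp

theorem isBigO_sum_absNorm_sup_sub (hθ0 : 0 < θ) (hθ1 : θ < 1)
    (hcount : (fun x ↦ #(idealsLE R x) - c * x) =O[𝓟 (Ici 1)] (fun x ↦ x ^ θ)) :
    (fun x ↦ ∑ p ∈ idealsLE R x ×ˢ idealsLE R x, ((p.1 ⊔ p.2).absNorm : ℝ) -
      c ^ 2 / idealZeta R 2 * x ^ 2 * (c * Real.log x)) =O[𝓟 (Ici 1)] (fun x ↦ x ^ 2) := by
  have herror := isBigO_sum_absNorm_mul_comp_div (isBigO_card_idealsLE hθ1.le hcount) hθ0.le hθ1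
    (isBigO_card_coprimePairs_sub hθ0 hθ1 hcount)
  have hmain := ((Asymptotics.isBigO_refl (fun x : ℝ ↦ x ^ 2) _).const_mul_left
    (c ^ 2 / idealZeta R 2)).mul (isBigO_sum_inv_absNorm_sub_log hθ1 hcount)
  simp only [mul_one] at hmain
  refine (herror.add hmain).congr_left fun x ↦ ?_
  have hinv : ∑ E ∈ idealsLE R x, E.absNorm * (c ^ 2 / idealZeta R 2 * (x / E.absNorm) ^ 2) =
      c ^ 2 / idealZeta R 2 * x ^ 2 * ∑ E ∈ idealsLE R x, (E.absNorm : ℝ)⁻¹ := by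
    rw [Finset.mul_sum]
    refine Finset.sum_congr rfl fun E hE ↦ ?_
    have hE0 := absNorm_pos_of_ne_bot (mem_idealsLE.mp hE).1
    field_simp
  rw [sum_comp_sup_eq_sum_mul_card_coprimePairs (fun I ↦ (I.absNorm : ℝ))]
  simp only [mul_sub, Finset.sum_sub_distrib, hinv]
  ring

theorem isBigO_rpow_mul_log {r s : ℝ} (hrs : r < s) :
    (fun x ↦ x ^ r * Real.log x) =O[𝓟 (Ici 1)] (fun x ↦ x ^ s) := by
  have hpos : 0 < s - r := sub_pos.mpr hrs
  refine Asymptotics.isBigO_principal.mpr ⟨(s - r)⁻¹, fun x (hx : 1 ≤ x) ↦ ?_⟩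
  have hx0 : 0 < x := zero_lt_one.trans_le hx
  have hlog := log_le_rpow_div hx0.le hpos
  rw [norm_of_nonneg (mul_nonneg (by positivity) (log_nonneg hx)), norm_of_nonneg (by positivity)]
  calc x ^ r * Real.log x ≤ x ^ r * (x ^ (s - r) / (s - r)) := by gcongr
    _ = (s - r)⁻¹ * x ^ s := by
        rw [mul_div_assoc', ← rpow_add hx0, add_sub_cancel, div_eq_inv_mul]

theorem card_idealsLE_pos {x : ℝ} (hx : 1 ≤ x) : 0 < (#(idealsLE R x) : ℝ) :=
  Nat.cast_pos.mpr (Finset.card_pos.mpr ⟨⊤, by simpa using hx⟩)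

theorem isBigO_id_card_idealsLE (hc : 0 < c) (hθ : θ < 1)
    (hcount : (fun x ↦ #(idealsLE R x) - c * x) =O[𝓟 (Ici 1)] (fun x ↦ x ^ θ)) :
    (fun x ↦ x) =O[𝓟 (Ici 1)] (fun x ↦ (#(idealsLE R x) : ℝ)) := by
  obtain ⟨B, hB0, hB⟩ := hcount.exists_pos
  rw [Asymptotics.isBigOWith_principal] at hB
  refine Asymptotics.isBigO_principal.mpr ⟨max (2 / c) ((2 * B / c) ^ (1 - θ)⁻¹),
    fun x (hx : 1 ≤ x) ↦ ?_⟩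
  have hx0 : 0 < x := zero_lt_one.trans_le hx
  have h1θ : 0 < 1 - θ := sub_pos.mpr hθ
  rw [norm_of_nonneg hx0.le, norm_of_nonneg (Nat.cast_nonneg _)]
  rcases le_total (B * x ^ θ) (c * x / 2) with hlarge | hsmall
  · have hBx := hB x hx
    rw [norm_of_nonneg (rpow_nonneg hx0.le θ), norm_eq_abs, abs_le] at hBx
    calc x ≤ 2 / c * #(idealsLE R x) := by
          rw [div_mul_eq_mul_div, le_div_iff₀ hc]
          linarith [hBx.1]
      _ ≤ _ := by gcongr; exact le_max_left _ _
  · have hxθ : x ^ (1 - θ) ≤ 2 * B / c := by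
      rw [rpow_sub hx0, rpow_one, div_le_div_iff₀ (by positivity) hc]
      linarith
    calc x = (x ^ (1 - θ)) ^ (1 - θ)⁻¹ := (rpow_rpow_inv hx0.le h1θ.ne').symm
      _ ≤ (2 * B / c) ^ (1 - θ)⁻¹ * 1 := by rw [mul_one]; gcongr
      _ ≤ _ := by
          gcongr
          · exact le_max_right _ _
          · exact_mod_cast card_idealsLE_pos (R := R) hx

theorem expected_gcdNorm_asymptotic_general (hc : 0 < c) (hθ0 : 0 < θ) (hθ1 : θ < 1)
    (hcount : (fun x ↦ #(idealsLE R x) - c * x) =O[𝓟 (Ici 1)] (fun x ↦ x ^ θ)) :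
    (fun x ↦ meanGcdNorm R x - c / idealZeta R 2 * Real.log x) =O[𝓟 (Ici 1)]
      (fun _ ↦ (1 : ℝ)) := by
  have hlog : (fun x ↦ c / idealZeta R 2 *
      ((#(idealsLE R x) ^ 2 - c ^ 2 * x ^ 2) * Real.log x)) =O[𝓟 (Ici 1)] (fun x ↦ x ^ 2) := by
    refine (((isBigO_card_idealsLE_sq_sub hθ1.le hcount).mul (Asymptotics.isBigO_refl _ _)).trans
      ?_).const_mul_left _
    simpa only [rpow_two] using isBigO_rpow_mul_log (by linarith : 1 + θ < 2)
  have hnum := (isBigO_sum_absNorm_sup_sub hθ0 hθ1 hcount).sub hlog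
  have hquot := (hnum.trans ((isBigO_id_card_idealsLE hc hθ1 hcount).pow 2)).mul
    (Asymptotics.isBigO_refl (fun x ↦ ((#(idealsLE R x) : ℝ) ^ 2)⁻¹) _)
  refine hquot.congr' ?_ ?_ <;> filter_upwards [mem_principal_self (Ici (1 : ℝ))] with x hx <;>
    have hpos := card_idealsLE_pos (R := R) hx
  · rw [meanGcdNorm]
    field_simp
    ring
  · exact mul_inv_cancel₀ (by positivity)

end Density

section GaussianIdeals

/-- The `ℤ`-basis `1, i` of the Gaussian integers. -/
noncomputable def gaussianIntBasis : Module.Basis (Fin 2) ℤ GaussianInt :=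
  .ofEquivFun
    { toFun := fun z ↦ ![z.re, z.im]
      invFun := fun v ↦ ⟨v 0, v 1⟩
      map_add' := fun z w ↦ by simp
      map_smul' := fun n z ↦ by simp
      left_inv := fun z ↦ by simp
      right_inv := fun v ↦ by ext i; fin_cases i <;> simp }

instance : Module.Free ℤ GaussianInt := .of_basis gaussianIntBasis

instance : Module.Finite ℤ GaussianInt := .of_basis gaussianIntBasis

theorem algebraNorm_gaussianInt (z : GaussianInt) : Algebra.norm ℤ z = z.norm := by
  rw [Algebra.norm_eq_matrix_det gaussianIntBasis, Matrix.det_fin_two, Zsqrtd.norm_def]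
  simp [gaussianIntBasis, Algebra.leftMulMatrix_eq_repr_mul]

theorem isUnit_gaussianInt_iff {u : GaussianInt} :
    IsUnit u ↔ u = ⟨1, 0⟩ ∨ u = ⟨-1, 0⟩ ∨ u = ⟨0, 1⟩ ∨ u = ⟨0, -1⟩ := by
  rw [← Zsqrtd.norm_eq_one_iff' (by norm_num)]
  constructor
  · obtain ⟨a, b⟩ := u
    intro h
    rw [Zsqrtd.norm_def] at h
    have ha : |a| ≤ 1 := abs_le_one_iff_mul_self_le_one.mpr (by nlinarith [mul_self_nonneg b])
    have hb : |b| ≤ 1 := abs_le_one_iff_mul_self_le_one.mpr (by nlinarith [mul_self_nonneg a])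
    obtain ⟨ha1, ha2⟩ := abs_le.mp ha
    obtain ⟨hb1, hb2⟩ := abs_le.mp hb
    interval_cases a <;> interval_cases b <;> simp_all
  · rintro (rfl | rfl | rfl | rfl) <;> rfl

/-- The ideal of `ℤ[i]` generated by the point `(a + 1) + b i` of the half-open first quadrant
`0 < re`, `0 ≤ im`, which meets every class of nonzero associates exactly once. -/
def quadrantIdeal (p : ℕ × ℕ) : Ideal GaussianInt := Ideal.span {⟨p.1 + 1, p.2⟩}

theorem absNorm_quadrantIdeal (p : ℕ × ℕ) :
    (quadrantIdeal p).absNorm = (p.1 + 1) ^ 2 + p.2 ^ 2 := by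
  rw [quadrantIdeal, Ideal.absNorm_span_singleton, algebraNorm_gaussianInt, Zsqrtd.norm_def]
  zify
  rw [abs_of_nonneg (by nlinarith)]
  ring

theorem quadrantIdeal_ne_bot (p : ℕ × ℕ) : quadrantIdeal p ≠ ⊥ := by
  rw [Ne, ← Ideal.absNorm_eq_zero_iff, absNorm_quadrantIdeal]
  positivity

theorem quadrantIdeal_injective : Function.Injective quadrantIdeal := by
  rintro ⟨a, b⟩ ⟨c, d⟩ h
  obtain ⟨u, hu⟩ := Ideal.span_singleton_eq_span_singleton.mp h
  obtain ⟨hre, him⟩ := Zsqrtd.ext_iff.mp hu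
  rcases isUnit_gaussianInt_iff.mp u.isUnit with h | h | h | h <;>
    simp only [h, Zsqrtd.re_mul, Zsqrtd.im_mul] at hre him <;> grind

theorem exists_quadrantIdeal_eq {I : Ideal GaussianInt} (hI : I ≠ ⊥) :
    ∃ p, quadrantIdeal p = I := by
  obtain ⟨z, rfl⟩ := (IsPrincipalIdealRing.principal I).principal
  rw [Ideal.submodule_span_eq, Ne, Ideal.span_singleton_eq_bot] at hI
  obtain ⟨u, hu, hre, him⟩ : ∃ u, IsUnit u ∧ 0 < (z * u).re ∧ 0 ≤ (z * u).im := by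
    have hquadrants : 0 < z.re ∧ 0 ≤ z.im ∨ z.re ≤ 0 ∧ 0 < z.im ∨ z.re < 0 ∧ z.im ≤ 0 ∨
        0 ≤ z.re ∧ z.im < 0 := by
      rw [Zsqrtd.ext_iff, Zsqrtd.re_zero, Zsqrtd.im_zero] at hI
      omega
    simp only [isUnit_gaussianInt_iff, Zsqrtd.re_mul, Zsqrtd.im_mul]
    rcases hquadrants with h | h | h | h
    · exact ⟨⟨1, 0⟩, by simp, by simp; omega⟩
    · exact ⟨⟨0, -1⟩, by simp, by simp; omega⟩
    · exact ⟨⟨-1, 0⟩, by simp, by simp; omega⟩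
    · exact ⟨⟨0, 1⟩, by simp, by simp; omega⟩
  refine ⟨((z * u).re.toNat - 1, (z * u).im.toNat), ?_⟩
  have hgen : (⟨((z * u).re.toNat - 1 : ℕ) + 1, (z * u).im.toNat⟩ : GaussianInt) = z * u := by
    ext <;> simp only <;> omega
  rw [quadrantIdeal, hgen, Ideal.submodule_span_eq, Ideal.span_singleton_mul_right_unit hu]

theorem sq_add_sq_le_iff_lt_floor {x : ℝ} {a b : ℕ} :
    ((a + 1) ^ 2 + b ^ 2 : ℝ) ≤ x ↔ a < ⌊√x⌋₊ ∧ b < ⌊√(x - (a + 1 : ℕ) ^ 2)⌋₊ + 1 := by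
  rw [← Nat.add_one_le_iff, Nat.le_floor_iff (sqrt_nonneg _), Order.lt_add_one_iff,
    Nat.le_floor_iff (sqrt_nonneg _), le_sqrt' (by positivity), Nat.cast_add_one]
  constructor
  · exact fun h ↦ ⟨by nlinarith [sq_nonneg (b : ℝ)], le_sqrt_of_sq_le (by linarith)⟩
  · rintro ⟨ha, hb⟩
    rw [le_sqrt (by positivity) (by linarith)] at hb
    linarith

theorem card_idealsLE_gaussianInt (x : ℝ) :
    #(idealsLE GaussianInt x) =
      ∑ a ∈ Finset.range ⌊√x⌋₊, (⌊√(x - (a + 1 : ℕ) ^ 2)⌋₊ + 1) := by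
  have hmem (a b : ℕ) : quadrantIdeal (a, b) ∈ idealsLE GaussianInt x ↔
      a < ⌊√x⌋₊ ∧ b < ⌊√(x - (a + 1 : ℕ) ^ 2)⌋₊ + 1 := by
    rw [mem_idealsLE, and_iff_right (quadrantIdeal_ne_bot _), absNorm_quadrantIdeal,
      ← sq_add_sq_le_iff_lt_floor]
    push_cast
    rfl
  calc #(idealsLE GaussianInt x)
      = #((Finset.range ⌊√x⌋₊).sigma fun a ↦ Finset.range (⌊√(x - (a + 1 : ℕ) ^ 2)⌋₊ + 1)) := by
        symm
        refine Finset.card_nbij (fun p ↦ quadrantIdeal (p.1, p.2)) (fun p hp ↦ ?_)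
          (fun p _ q _ h ↦ ?_) fun I hI ↦ ?_
        · simpa [hmem] using hp
        · simpa [Sigma.ext_iff] using quadrantIdeal_injective h
        · obtain ⟨⟨a, b⟩, rfl⟩ := exists_quadrantIdeal_eq (mem_idealsLE.mp hI).1
          exact ⟨⟨a, b⟩, by simpa using (hmem a b).mp hI, rfl⟩
    _ = ∑ a ∈ Finset.range ⌊√x⌋₊, (⌊√(x - (a + 1 : ℕ) ^ 2)⌋₊ + 1) := by
        simp only [Finset.card_sigma, Finset.card_range]

end GaussianIdeals

section QuarterDisc

theorem integral_sqrt_one_sub_sq_zero_one : ∫ t in (0 : ℝ)..1, √(1 - t ^ 2) = π / 4 := by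
  have hcont : Continuous fun t : ℝ ↦ √(1 - t ^ 2) := by fun_prop
  have hreflect := intervalIntegral.integral_comp_neg (a := 0) (b := 1) fun t : ℝ ↦ √(1 - t ^ 2)
  have hdisc := integral_sqrt_one_sub_sq
  rw [← intervalIntegral.integral_add_adjacent_intervals (b := 0)
    (hcont.intervalIntegrable _ _) (hcont.intervalIntegrable _ _)] at hdisc
  simp only [neg_sq, neg_zero] at hreflect
  linarith

theorem integral_sqrt_sub_sq {x b : ℝ} (hx : 0 < x) (hb : √x ≤ b) :
    ∫ t in 0..b, √(x - t ^ 2) = π / 4 * x := by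
  have hcont : Continuous fun t : ℝ ↦ √(x - t ^ 2) := by fun_prop
  have hsqrt : 0 < √x := sqrt_pos.mpr hx
  have hdisc : ∫ t in 0..√x, √(x - t ^ 2) = π / 4 * x := by
    have hscale := intervalIntegral.integral_comp_mul_left (a := 0) (b := 1)
      (fun t : ℝ ↦ √(x - t ^ 2)) hsqrt.ne'
    have hfactor (t : ℝ) : √(x - (√x * t) ^ 2) = √x * √(1 - t ^ 2) := by
      rw [← sqrt_mul hx.le, mul_pow, sq_sqrt hx.le, mul_one_sub]
    simp only [hfactor, mul_zero, mul_one, intervalIntegral.integral_const_mul,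
      integral_sqrt_one_sub_sq_zero_one, smul_eq_mul, eq_inv_mul_iff_mul_eq₀ hsqrt.ne'] at hscale
    rw [← hscale, ← mul_assoc, mul_self_sqrt hx.le, mul_comm]
  have hzero : ∫ t in √x..b, √(x - t ^ 2) = 0 := by
    refine intervalIntegral.integral_zero_ae (.of_forall fun t ht ↦ sqrt_eq_zero_of_nonpos ?_)
    rw [uIoc_of_le hb] at ht
    exact sub_nonpos.mpr ((sqrt_le_left (hsqrt.le.trans ht.1.le)).mp ht.1.le)
  rw [← intervalIntegral.integral_add_adjacent_intervals (hcont.intervalIntegrable _ _)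
    (hcont.intervalIntegrable _ _), hdisc, hzero, add_zero]

theorem abs_sum_sqrt_sub_sq_sub_le {x : ℝ} (hx : 0 < x) :
    |∑ a ∈ Finset.range ⌊√x⌋₊, √(x - (a + 1 : ℕ) ^ 2) - π / 4 * x| ≤ √x := by
  set n := ⌊√x⌋₊
  have hanti : AntitoneOn (fun t : ℝ ↦ √(x - t ^ 2)) (Icc (0 : ℝ) (0 + (n + 1 : ℕ))) :=
    fun s hs t _ hst ↦ sqrt_le_sqrt (by gcongr; exact hs.1)
  have hint : ∫ t in (0 : ℝ)..0 + (n + 1 : ℕ), √(x - t ^ 2) = π / 4 * x :=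
    integral_sqrt_sub_sq hx (by simpa using (Nat.lt_floor_add_one √x).le)
  have hupper := hanti.sum_le_integral
  have hlower := hanti.integral_le_sum
  rw [hint] at hupper hlower
  rw [Finset.sum_range_succ] at hupper
  rw [Finset.sum_range_succ'] at hlower
  simp only [zero_add, Nat.cast_zero, ne_eq, OfNat.ofNat_ne_zero, not_false_eq_true, zero_pow,
    sub_zero] at hupper hlower
  rw [abs_le]
  constructor <;> linarith [sqrt_nonneg x, sqrt_nonneg (x - ((n + 1 : ℕ) : ℝ) ^ 2)]

end QuarterDisc

theorem isBigO_card_idealsLE_gaussianInt_sub :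
    (fun x ↦ #(idealsLE GaussianInt x) - π / 4 * x) =O[𝓟 (Ici 1)] (fun x ↦ x ^ (1 / 2 : ℝ)) := by
  refine Asymptotics.isBigO_principal.mpr ⟨2, fun x (hx : 1 ≤ x) ↦ ?_⟩
  rw [norm_eq_abs, ← sqrt_eq_rpow, norm_of_nonneg (sqrt_nonneg x), card_idealsLE_gaussianInt]
  have hround : |∑ a ∈ Finset.range ⌊√x⌋₊, (⌊√(x - (a + 1 : ℕ) ^ 2)⌋₊ + 1 : ℝ) -
      ∑ a ∈ Finset.range ⌊√x⌋₊, √(x - (a + 1 : ℕ) ^ 2)| ≤ √x := by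
    rw [← Finset.sum_sub_distrib]
    calc _ ≤ ∑ a ∈ Finset.range ⌊√x⌋₊, (1 : ℝ) := by
          refine (Finset.abs_sum_le_sum_abs _ _).trans (Finset.sum_le_sum fun a _ ↦ abs_le.mpr ?_)
          constructor <;> linarith [Nat.floor_le (sqrt_nonneg (x - ((a + 1 : ℕ) : ℝ) ^ 2)),
            Nat.lt_floor_add_one √(x - ((a + 1 : ℕ) : ℝ) ^ 2)]
      _ ≤ √x := by simpa using Nat.floor_le (sqrt_nonneg x)
  push_cast at hround ⊢
  have hdisc := abs_sum_sqrt_sub_sq_sub_le (zero_lt_one.trans_le hx)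
  push_cast at hdisc
  rw [two_mul]
  exact (abs_sub_le _ _ _).trans (add_le_add hround hdisc)

theorem coe_idealsLE_product_idealsLE (x : ℝ) :
    ((idealsLE GaussianInt x ×ˢ idealsLE GaussianInt x : Finset _) : Set _) = P x := by
  ext p
  simp only [Finset.mem_coe, Finset.mem_product, mem_idealsLE]
  exact and_and_and_comm.trans and_assoc

theorem tsum_normI_sup_div_ncard_eq_meanGcdNorm (x : ℝ) :
    (∑' p : P x, (normI (p.1.1 ⊔ p.1.2) : ℝ)) / ((P x).ncard : ℝ) = meanGcdNorm GaussianInt x := by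
  rw [← coe_idealsLE_product_idealsLE, ncard_coe_finset, Finset.card_product, Nat.cast_mul, ← sq,
    Finset.tsum_subtype' _ fun p : Ideal GaussianInt × Ideal GaussianInt ↦
      (normI (p.1 ⊔ p.2) : ℝ)]
  rfl

theorem zetaQi2_eq_idealZeta : zetaQi2 = idealZeta GaussianInt 2 := by
  have hsupport : Function.support (fun I : Ideal GaussianInt ↦ (I.absNorm : ℝ) ^ (-2 : ℝ)) ⊆
      {I | I ≠ ⊥} := by
    rintro I hI rfl
    simp at hI
  rw [idealZeta, ← tsum_subtype_eq_of_support_subset hsupport]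
  refine tsum_congr fun I ↦ ?_
  rw [rpow_neg (Nat.cast_nonneg _), rpow_two, one_div]
  rfl

theorem expected_gcdNorm_asymptotic :
    ∃ C : ℝ, 0 < C ∧ ∀ x : ℝ, 2 ≤ x →
      |(∑' p : P x, (normI (p.1.1 ⊔ p.1.2) : ℝ)) / ((P x).ncard : ℝ) -
          π / (4 * zetaQi2) * Real.log x| ≤ C := by
  obtain ⟨C, hC0, hC⟩ := (expected_gcdNorm_asymptotic_general (by positivity) one_half_pos
    one_half_lt_one isBigO_card_idealsLE_gaussianInt_sub).exists_pos
  rw [Asymptotics.isBigOWith_principal] at hC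
  refine ⟨C, hC0, fun x hx ↦ ?_⟩
  rw [tsum_normI_sup_div_ncard_eq_meanGcdNorm, zetaQi2_eq_idealZeta, ← div_div]
  simpa using hC x (one_le_two.trans hx)
end

section
/- For every natural number n ≥ 1, four times the number of nonzero ideals I of ℤ[i] with N(I) = n equals r(n), the number of pairs (a, b) ∈ ℤ × ℤ with a² + b² = n. -/
/-- `r n` : the number of pairs `(a, b) ∈ ℤ × ℤ` with `a² + b² = n`. -/
noncomputable def r (n : ℕ) : ℕ := {p : ℤ × ℤ | p.1 ^ 2 + p.2 ^ 2 = (n : ℤ)}.ncard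

/-!
Since `ℤ[i]` is a principal ideal domain, a nonzero element is uniquely a chosen generator of the
ideal it spans times a unit. The ideal `(z)` has norm `z.norm = a² + b²` for `z = a + bi`, so every
ideal of norm `n ≠ 0` accounts for as many pairs as there are units, namely four.
-/

section PrincipalIdealDomain

open Submodule.IsPrincipal

variable {R : Type*} [CommRing R] [IsDomain R] [IsPrincipalIdealRing R] {S : Set (Ideal R)}

theorem bijOn_generator_mul_unit (hS : ⊥ ∉ S) :
    Set.BijOn (fun p : Ideal R × Rˣ ↦ generator p.1 * (p.2 : R)) (S ×ˢ Set.univ)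
      {x | Ideal.span {x} ∈ S} := by
  have span_eq (I : Ideal R) (u : Rˣ) : Ideal.span {generator I * (u : R)} = I := by
    rw [Ideal.span_singleton_mul_right_unit u.isUnit, Ideal.span_singleton_generator]
  refine ⟨?mapsTo, ?injOn, ?surjOn⟩
  case mapsTo =>
    rintro ⟨I, u⟩ ⟨hI, -⟩
    rwa [Set.mem_ofPred_eq, span_eq]
  case injOn =>
    rintro ⟨I, u⟩ ⟨hI, -⟩ ⟨J, v⟩ - (h : generator I * (u : R) = generator J * (v : R))
    obtain rfl : I = J := by rw [← span_eq I u, h, span_eq]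
    have generator_ne_zero : generator I ≠ 0 :=
      mt (eq_bot_iff_generator_eq_zero I).mpr (ne_of_mem_of_not_mem hI hS)
    rw [Units.ext (mul_left_cancel₀ generator_ne_zero h)]
  case surjOn =>
    intro x hx
    obtain ⟨u, hu⟩ : Associated (generator (Ideal.span {x})) x :=
      Ideal.span_singleton_eq_span_singleton.mp (Ideal.span_singleton_generator _)
    exact ⟨(Ideal.span {x}, u), ⟨hx, Set.mem_univ u⟩, hu⟩

theorem ncard_setOf_span_singleton_mem (hS : ⊥ ∉ S) :
    {x : R | Ideal.span {x} ∈ S}.ncard = Nat.card Rˣ * S.ncard := by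
  have hbij := bijOn_generator_mul_unit hS
  rw [← hbij.image_eq, hbij.injOn.ncard_image, Set.ncard_prod, Set.ncard_univ, mul_comm]

end PrincipalIdealDomain

section Zsqrtd

variable {d : ℤ}

/-- The `ℤ`-basis `(1, √d)` of `ℤ√d`, used to compute `Algebra.norm ℤ` as a determinant. -/
noncomputable def zsqrtdBasis (d : ℤ) : Module.Basis (Fin 2) ℤ (ℤ√d) :=
  Module.Basis.ofEquivFun
    { toFun := fun z ↦ ![z.re, z.im]
      invFun := fun v ↦ ⟨v 0, v 1⟩
      map_add' := fun x y ↦ by simp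
      map_smul' := fun n x ↦ by simp
      left_inv := fun _ ↦ rfl
      right_inv := fun v ↦ by ext i; fin_cases i <;> rfl }

theorem zsqrtdBasis_repr (z : ℤ√d) : ⇑((zsqrtdBasis d).repr z) = ![z.re, z.im] := rfl

theorem coe_zsqrtdBasis : ⇑(zsqrtdBasis d) = ![1, Zsqrtd.sqrtd] := by
  funext i
  apply (zsqrtdBasis d).repr.injective
  ext j
  rw [Module.Basis.repr_self, zsqrtdBasis_repr]
  fin_cases i <;> fin_cases j <;> simp

theorem algebraNorm_zsqrtd (z : ℤ√d) : Algebra.norm ℤ z = z.norm := by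
  rw [Algebra.norm_eq_matrix_det (zsqrtdBasis d), Matrix.det_fin_two]
  simp [Algebra.leftMulMatrix_eq_repr_mul, zsqrtdBasis_repr, coe_zsqrtdBasis, Zsqrtd.norm_def]

instance : Module.Free ℤ (ℤ√d) := .of_basis (zsqrtdBasis d)

instance : Module.Finite ℤ (ℤ√d) := .of_basis (zsqrtdBasis d)

end Zsqrtd

section GaussianInt

theorem norm_gaussianInt (z : GaussianInt) : z.norm = z.re ^ 2 + z.im ^ 2 := by
  rw [Zsqrtd.norm_def]
  ring

theorem isUnit_gaussianInt_iff_s16 {z : GaussianInt} :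
    IsUnit z ↔ z ∈ ({1, -1, ⟨0, 1⟩, ⟨0, -1⟩} : Finset GaussianInt) := by
  rw [← Zsqrtd.norm_eq_one_iff' (by norm_num), norm_gaussianInt]
  constructor
  · obtain ⟨a, b⟩ := z
    intro (h : a ^ 2 + b ^ 2 = 1)
    obtain ⟨ha₁, ha₂⟩ : -1 ≤ a ∧ a ≤ 1 :=
      abs_le.mp ((sq_le_one_iff_abs_le_one a).mp (by linarith [sq_nonneg b]))
    obtain ⟨hb₁, hb₂⟩ : -1 ≤ b ∧ b ≤ 1 :=
      abs_le.mp ((sq_le_one_iff_abs_le_one b).mp (by linarith [sq_nonneg a]))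
    interval_cases a <;> interval_cases b <;> first | decide | omega
  · intro h
    fin_cases h <;> rfl

theorem natCard_units_gaussianInt : Nat.card GaussianIntˣ = 4 := by
  have range_val : Set.range (Units.val : GaussianIntˣ → GaussianInt) =
      ({1, -1, ⟨0, 1⟩, ⟨0, -1⟩} : Finset GaussianInt) :=
    Set.ext fun _ ↦ isUnit_gaussianInt_iff_s16
  rw [← Nat.card_range_of_injective Units.val_injective, range_val, Nat.card_coe_set_eq,
    Set.ncard_coe_finset]
  rfl

theorem normI_span_singleton (z : GaussianInt) : (normI (Ideal.span {z}) : ℤ) = z.norm := by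
  have normI_eq_absNorm (I : Ideal GaussianInt) : normI I = Ideal.absNorm I := rfl
  rw [normI_eq_absNorm, Ideal.absNorm_span_singleton, algebraNorm_zsqrtd,
    GaussianInt.abs_natCast_norm]

theorem r_eq_ncard_norm_eq (n : ℕ) : r n = {z : GaussianInt | z.norm = n}.ncard :=
  Set.ncard_congr (fun p _ ↦ ⟨p.1, p.2⟩) (fun _ hp ↦ (norm_gaussianInt _).trans hp)
    (fun _ _ _ _ h ↦ Prod.ext (congrArg Zsqrtd.re h) (congrArg Zsqrtd.im h))
    (fun z hz ↦ ⟨(z.re, z.im), (norm_gaussianInt z).symm.trans hz, rfl⟩)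

end GaussianInt

theorem four_mul_idealCount_eq_r (n : ℕ) (hn : 1 ≤ n) :
    4 * {I : Ideal GaussianInt | I ≠ ⊥ ∧ normI I = n}.ncard = r n := by
  have span_mem_iff (z : GaussianInt) :
      Ideal.span {z} ∈ {I : Ideal GaussianInt | I ≠ ⊥ ∧ normI I = n} ↔ z.norm = n := by
    rw [Set.mem_ofPred_eq, Ne, Ideal.span_singleton_eq_bot, ← GaussianInt.norm_eq_zero,
      ← normI_span_singleton]
    omega
  rw [r_eq_ncard_norm_eq, ← natCard_units_gaussianInt,
    ← ncard_setOf_span_singleton_mem fun h ↦ h.1 rfl]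
  simp only [span_mem_iff]
end
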